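/- Fix H ∈ (0,1) and c > 0, and let φ_c be the localisation function. Then for every real x ≠ 0, ∫₀¹ |s·x|^{2H}·φ_c(s·x)·(1 − s) ds ≤ (1 + 1/(2 − 2H))·c^{1 + 1/(2H)}·|x|^{−1}. -/

import Mathlib

/-- The localisation function `φ_c(x) = min(1, c^{3/(2H)} |x|^{-3})`, with the convention
`φ_c(0) = 1`. -/
noncomputable def locFun (H c : ℝ) (x : ℝ) : ℝ :=
  if x = 0 then 1 else min 1 (c ^ ((3 : ℝ) / (2 * H)) * |x| ^ (-3 : ℝ))

/-- For `H ∈ (0,1)`, `c > 0` and `x ≠ 0`,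
`∫₀¹ |s x|^{2H} φ_c(s x) (1 - s) ds ≤ (1 + 1/(2 - 2H)) c^{1 + 1/(2H)} |x|⁻¹`. -/
theorem stmt15 (H c : ℝ) (hH0 : 0 < H) (hH1 : H < 1) (hc : 0 < c) (x : ℝ) (hx : x ≠ 0) :
    ∫ s in (0 : ℝ)..1, |s * x| ^ (2 * H) * locFun H c (s * x) * (1 - s)
      ≤ (1 + 1 / (2 - 2 * H)) * c ^ (1 + 1 / (2 * H)) * |x|⁻¹ := by
  obtain ⟨a, ha⟩ : ∃ a : ℝ, a = c ^ (1 / (2 * H)) := ⟨_, rfl⟩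
  have ha0 : 0 < a := ha ▸ Real.rpow_pos_of_pos hc _
  have hca : c = a ^ (2 * H) := by
    rw [ha, ← Real.rpow_mul hc.le, one_div_mul_cancel (by positivity), Real.rpow_one]
  have hc3 : c ^ ((3 : ℝ) / (2 * H)) = a ^ (3 : ℝ) := by
    rw [ha, ← Real.rpow_mul hc.le]; congr 1; ring
  have hc1 : c ^ (1 + 1 / (2 * H)) = a ^ (2 * H) * a := by
    rw [Real.rpow_add hc, Real.rpow_one, ← ha, ← hca]
  obtain ⟨u, hu⟩ : ∃ u : ℝ, u = |x| := ⟨_, rfl⟩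
  have hu0 : 0 < u := hu ▸ abs_pos.mpr hx
  have ht0 : 0 < a / u := by positivity
  rw [hc1, ← hu, intervalIntegral.integral_of_le zero_le_one]
  let g : ℝ → ℝ := fun s => if s ≤ a / u then a ^ (2 * H)
    else a ^ (3 : ℝ) * u ^ (2 * H - 3) * s ^ (2 * H - 3)
  have hg1 : Set.EqOn g (fun _ => a ^ (2 * H)) (Set.Ioc 0 (a / u)) := fun s hs => by
    simp [g, hs.2]
  have hg2 : Set.EqOn g (fun s => a ^ (3 : ℝ) * u ^ (2 * H - 3) * s ^ (2 * H - 3))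
      (Set.Ioi (a / u)) := fun s hs => by
    simp only [g, if_neg (not_le.mpr (Set.mem_Ioi.mp hs))]
  have hi1 : MeasureTheory.IntegrableOn g (Set.Ioc 0 (a / u)) := by
    refine MeasureTheory.IntegrableOn.congr_fun ?_ hg1.symm measurableSet_Ioc
    exact MeasureTheory.integrableOn_const (by simp)
  have hi2 : MeasureTheory.IntegrableOn g (Set.Ioi (a / u)) := by
    refine MeasureTheory.IntegrableOn.congr_fun ?_ hg2.symm measurableSet_Ioi
    exact (integrableOn_Ioi_rpow_of_lt (by linarith) ht0).const_mul _
  have hun : Set.Ioc 0 (a / u) ∪ Set.Ioi (a / u) = Set.Ioi 0 := Set.Ioc_union_Ioi_eq_Ioi ht0.le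
  have hi : MeasureTheory.IntegrableOn g (Set.Ioi 0) := hun ▸ hi1.union hi2
  have hgI : ∫ s in Set.Ioi 0, g s = (1 + 1 / (2 - 2 * H)) * (a ^ (2 * H) * a) * u⁻¹ := by
    rw [← hun, MeasureTheory.setIntegral_union (Set.Ioc_disjoint_Ioi le_rfl) measurableSet_Ioi
      hi1 hi2, MeasureTheory.setIntegral_congr_fun measurableSet_Ioc hg1,
      MeasureTheory.setIntegral_congr_fun measurableSet_Ioi hg2,
      MeasureTheory.integral_const_mul, integral_Ioi_rpow_of_lt (by linarith) ht0,
      Real.div_rpow ha0.le hu0.le]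
    have e1 : a ^ (3 : ℝ) * a ^ (2 * H - 3 + 1) = a ^ (2 * H) * a := by
      rw [← Real.rpow_add ha0, ← Real.rpow_add_one ha0.ne']; congr 1; ring
    have e2 : u ^ (2 * H - 3 + 1) = u ^ (2 * H - 3) * u := Real.rpow_add_one hu0.ne' _
    have hp : 0 < u ^ (2 * H - 3) := Real.rpow_pos_of_pos hu0 _
    have h2 : 2 - 2 * H ≠ 0 := by linarith
    have h3 : 2 * H - 3 + 1 = -(2 - 2 * H) := by ring
    have e3 : a ^ (3 : ℝ) * u ^ (2 * H - 3) *
        (-(a ^ (2 * H - 3 + 1) / u ^ (2 * H - 3 + 1)) / (2 * H - 3 + 1))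
        = (a ^ (2 * H) * a) * u⁻¹ / (2 - 2 * H) := by
      rw [← e1, e2]
      generalize a ^ (2 * H - 3 + 1) = A
      generalize a ^ (3 : ℝ) = B
      generalize u ^ (2 * H - 3) = P at *
      rw [h3]
      field_simp
    rw [e3]
    simp [ht0.le]
    field_simp
  have hg0 : ∀ s ∈ Set.Ioi (0 : ℝ), 0 ≤ g s := fun s hs => by
    have hs : 0 < s := hs
    simp only [g]; split_ifs <;> positivity
  rw [← hgI]
  have key : ∀ s ∈ Set.Ioc (0 : ℝ) 1,
      0 ≤ |s * x| ^ (2 * H) * locFun H c (s * x) * (1 - s) ∧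
      |s * x| ^ (2 * H) * locFun H c (s * x) * (1 - s) ≤ g s := by
    intro s hs
    have hs0 := hs.1
    have hs1 := hs.2
    have hloc : locFun H c (s * x) = min 1 (a ^ (3 : ℝ) * (s * u) ^ (-3 : ℝ)) := by
      rw [locFun, if_neg (mul_ne_zero hs0.ne' hx), hc3, abs_mul, abs_of_pos hs0, hu]
    rw [hloc, abs_mul, abs_of_pos hs0, ← hu]
    have hp : 0 < (s * u) ^ (2 * H) := by positivity
    have hm : 0 ≤ min 1 (a ^ (3 : ℝ) * (s * u) ^ (-3 : ℝ)) := le_min zero_le_one (by positivity)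
    refine ⟨mul_nonneg (mul_nonneg hp.le hm) (by linarith), ?_⟩
    refine (mul_le_of_le_one_right (mul_nonneg hp.le hm) (by linarith)).trans ?_
    simp only [g]
    split_ifs with h
    · refine (mul_le_of_le_one_right hp.le (min_le_left _ _)).trans ?_
      exact Real.rpow_le_rpow (by positivity) ((le_div_iff₀ hu0).mp h) (by positivity)
    · refine (mul_le_mul_of_nonneg_left (min_le_right _ _) hp.le).trans (le_of_eq ?_)
      have : (s * u) ^ (2 * H) * (s * u) ^ (-3 : ℝ) = s ^ (2 * H - 3) * u ^ (2 * H - 3) := by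
        rw [← Real.rpow_add (by positivity), ← Real.mul_rpow hs0.le hu0.le, sub_eq_add_neg]
      linear_combination a ^ (3 : ℝ) * this
  calc _ ≤ ∫ s in Set.Ioc 0 1, g s := by
        refine MeasureTheory.integral_mono_of_nonneg ?_ (hi.mono_set Set.Ioc_subset_Ioi_self) ?_
        · exact (MeasureTheory.ae_restrict_mem measurableSet_Ioc).mono fun s hs => (key s hs).1
        · exact (MeasureTheory.ae_restrict_mem measurableSet_Ioc).mono fun s hs => (key s hs).2
    _ ≤ _ := by
        refine MeasureTheory.setIntegral_mono_set hi ?_ Set.Ioc_subset_Ioi_self.eventuallyLE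
        exact (MeasureTheory.ae_restrict_mem measurableSet_Ioi).mono hg0
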